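/- Let κ, m ∈ ℝ and η̄ > 0. Let A, B : ℝ → ℂ be differentiable with A'(τ) = κ m B(τ) and B'(τ) = −κ B(τ) + ½ η̄² B(τ)² for all τ, and set G(τ, v) := exp(A(τ) + v B(τ)). Let T₁, T₂ : ℝ → ℂ be arbitrary functions, and let h₀, h₁, h₂ : ℝ → ℂ be differentiable with h₂'(τ) = 2(−κ + η̄² B(τ)) h₂(τ) + T₂(τ), h₁'(τ) = (−κ + η̄² B(τ)) h₁(τ) + (2κm + η̄²) h₂(τ) + T₁(τ), h₀'(τ) = κ m h₁(τ), and h₀(0) = h₁(0) = h₂(0) = 0. Define P(τ, v) := (h₀(τ) + v h₁(τ) + v² h₂(τ)) G(τ, v). Then P(0, v) = 0 for all v, and for every (τ, v) ∈ ℝ × ℝ, −∂P/∂τ + κ(m − v) ∂P/∂v + ½ η̄² v ∂²P/∂v² = −v (T₁(τ) + v T₂(τ)) G(τ, v). -/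

import Mathlib

/-!
Write `P = Q G` with `Q = h₀ + v h₁ + v² h₂`. The Riccati equations for `A` and `B` say exactly
that `G` solves the homogeneous CIR equation, so all terms without a derivative of `Q` cancel and
what is left is `G` times `-∂_τ Q + κ(m-v) ∂_v Q + η̄² v B ∂_v Q + ½ η̄² v ∂²_v Q`. Its coefficients
of `1, v, v²` are `0, -T₁, -T₂` by the linear ODE system.
The `v`-derivatives come from `hasDerivAt_quadratic_mul_exp`, applied twice.
-/

open Complex

/-- Quadratics times a fixed exponential `exp (a + v b)` are closed under `∂_v`, and the
coefficients transform by `q ↦ b q + ∂_v q`; the second derivative is thus another instance. -/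
lemma hasDerivAt_quadratic_mul_exp (q₀ q₁ q₂ a b : ℂ) (v : ℝ) :
    HasDerivAt (fun x : ℝ => (q₀ + (x : ℂ) * q₁ + (x : ℂ) ^ 2 * q₂) * Complex.exp (a + (x : ℂ) * b))
      (((b * q₀ + q₁) + (v : ℂ) * (b * q₁ + 2 * q₂) + (v : ℂ) ^ 2 * (b * q₂))
        * Complex.exp (a + (v : ℂ) * b)) v := by
  have hx : HasDerivAt (fun x : ℝ => (x : ℂ)) 1 v := Complex.ofRealCLM.hasDerivAt
  have hQ := ((hx.mul_const q₁).const_add q₀).add ((hx.pow 2).mul_const q₂)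
  have hE := ((hx.mul_const b).const_add a).cexp
  refine (hQ.mul hE).congr_deriv ?_
  simp only [Pi.add_apply, Pi.pow_apply]
  push_cast
  ring

/-- The VIX first-order correction ansatz `P(τ,v) = (h₀ + v h₁ + v² h₂) G` solves the
sourced backward CIR PDE `-∂_τ P + κ(m-v)∂_v P + ½η̄²v ∂²_v P = -v(T₁ + vT₂)G`
with zero initial condition, when `h₀, h₁, h₂` solve the stated triangular linear
ODE system and `G(τ,v) = exp(A(τ) + vB(τ))` with `A' = κmB`, `B' = -κB + ½η̄²B²`. -/
theorem vix_correction_ansatz (κ m ηb : ℝ) (hηb : 0 < ηb) (A B : ℝ → ℂ)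
    (hA : ∀ τ : ℝ, HasDerivAt A ((κ : ℂ) * (m : ℂ) * B τ) τ)
    (hB : ∀ τ : ℝ, HasDerivAt B
      (-(κ : ℂ) * B τ + (1 / 2) * (ηb : ℂ) ^ 2 * (B τ) ^ 2) τ)
    (G : ℝ → ℝ → ℂ)
    (hG : G = fun (τ v : ℝ) => Complex.exp (A τ + (v : ℂ) * B τ))
    (T₁ T₂ : ℝ → ℂ) (h₀ h₁ h₂ : ℝ → ℂ)
    (hh₂ : ∀ τ : ℝ, HasDerivAt h₂
      (2 * (-(κ : ℂ) + (ηb : ℂ) ^ 2 * B τ) * h₂ τ + T₂ τ) τ)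
    (hh₁ : ∀ τ : ℝ, HasDerivAt h₁
      ((-(κ : ℂ) + (ηb : ℂ) ^ 2 * B τ) * h₁ τ
        + (2 * (κ : ℂ) * (m : ℂ) + (ηb : ℂ) ^ 2) * h₂ τ + T₁ τ) τ)
    (hh₀ : ∀ τ : ℝ, HasDerivAt h₀ ((κ : ℂ) * (m : ℂ) * h₁ τ) τ)
    (hh₀0 : h₀ 0 = 0) (hh₁0 : h₁ 0 = 0) (hh₂0 : h₂ 0 = 0)
    (P : ℝ → ℝ → ℂ)
    (hP : P = fun (τ v : ℝ) => (h₀ τ + (v : ℂ) * h₁ τ + (v : ℂ) ^ 2 * h₂ τ) * G τ v) :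
    (∀ v : ℝ, P 0 v = 0) ∧
      ∀ τ v : ℝ,
        -deriv (fun τ' : ℝ => P τ' v) τ
        + (κ : ℂ) * ((m : ℂ) - (v : ℂ)) * deriv (fun v' : ℝ => P τ v') v
        + (1 / 2) * (ηb : ℂ) ^ 2 * (v : ℂ) *
            deriv (fun v' : ℝ => deriv (fun v'' : ℝ => P τ v'') v') v
        = -(v : ℂ) * (T₁ τ + (v : ℂ) * T₂ τ) * G τ v := by
  subst hG hP
  refine ⟨fun v => by simp [hh₀0, hh₁0, hh₂0], fun τ v => ?_⟩
  have hv : ∀ x : ℝ, deriv (fun y : ℝ => (h₀ τ + (y : ℂ) * h₁ τ + (y : ℂ) ^ 2 * h₂ τ)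
      * Complex.exp (A τ + (y : ℂ) * B τ)) x = _ :=
    fun x => (hasDerivAt_quadratic_mul_exp (h₀ τ) (h₁ τ) (h₂ τ) (A τ) (B τ) x).deriv
  have hτ := ((((hh₀ τ).add ((hh₁ τ).const_mul (v : ℂ))).add
    ((hh₂ τ).const_mul ((v : ℂ) ^ 2))).mul ((hA τ).add ((hB τ).const_mul (v : ℂ))).cexp).deriv
  simp only [hv]
  rw [(hasDerivAt_quadratic_mul_exp _ _ _ _ _ v).deriv]
  erw [hτ]
  simp only [Pi.add_apply]
  ring
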